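/- For every index i : Fin d and every x : Fin d → ℝ, the partial derivative of log p at x along the i-th coordinate equals -(x i - f i x)/(σ i)^2 + ∑_{j : Fin d} ((x j - f j x)/(σ j)^2) · (∂_i f j)(x), where ∂_i f j denotes the partial derivative of f j along the i-th coordinate. (Score decomposition for a general node, equation (14) of the paper.) -/

import Mathlib

open Real MeasureTheory

open ProbabilityTheory
open scoped NNReal

lemma inv_mul_exp_eq_gaussianPDFReal {σ : ℝ} (hσ : 0 ≤ σ) (μ x : ℝ) :
    (σ * √(2 * π))⁻¹ * exp (-(x - μ) ^ 2 / (2 * σ ^ 2)) =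
      gaussianPDFReal μ (σ.toNNReal ^ 2) x := by
  simp only [gaussianPDFReal, NNReal.coe_pow, coe_toNNReal σ hσ, sqrt_mul' _ (sq_nonneg σ),
    sqrt_sq hσ, mul_comm σ]

lemma log_gaussianPDFReal {v : ℝ≥0} (hv : v ≠ 0) (μ x : ℝ) :
    log (gaussianPDFReal μ v x) = log (√(2 * π * v))⁻¹ - (x - μ) ^ 2 / (2 * v) := by
  have h_norm : (√(2 * π * v))⁻¹ ≠ 0 := by positivity
  rw [gaussianPDFReal, log_mul h_norm (exp_ne_zero _), log_exp, neg_div, ← sub_eq_add_neg]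

lemma hasDerivAt_log_gaussianPDFReal {v : ℝ≥0} (hv : v ≠ 0) {m u : ℝ → ℝ} {m' u' t : ℝ}
    (hm : HasDerivAt m m' t) (hu : HasDerivAt u u' t) :
    HasDerivAt (fun s => log (gaussianPDFReal (m s) v (u s)))
      ((u t - m t) / v * (m' - u')) t := by
  simp only [log_gaussianPDFReal hv]
  refine ((((hu.fun_sub hm).fun_pow 2).div_const (2 * (v : ℝ))).const_sub _).congr_deriv ?_
  field_simp
  ring

theorem score_decomposition_general {ι : Type*} [Fintype ι] [DecidableEq ι]
    {σ : ι → ℝ} (hσ : ∀ j, 0 < σ j) {f : ι → (ι → ℝ) → ℝ} {p : (ι → ℝ) → ℝ}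
    (hp : ∀ x, p x = ∏ j, (σ j * √(2 * π))⁻¹ * exp (-(x j - f j x) ^ 2 / (2 * (σ j) ^ 2)))
    {i : ι} {x f' : ι → ℝ}
    (hf : ∀ j, HasDerivAt (fun t => f j (Function.update x i t)) (f' j) (x i)) :
    HasDerivAt (fun t => log (p (Function.update x i t)))
      (-(x i - f i x) / (σ i) ^ 2 + ∑ j, (x j - f j x) / (σ j) ^ 2 * f' j) (x i) := by
  have variance_ne_zero (j : ι) : (σ j).toNNReal ^ 2 ≠ 0 :=
    pow_ne_zero 2 (toNNReal_pos.2 (hσ j)).ne'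
  have log_p_eq_sum (y : ι → ℝ) :
      log (p y) = ∑ j, log (gaussianPDFReal (f j y) ((σ j).toNNReal ^ 2) (y j)) := by
    simp only [hp, inv_mul_exp_eq_gaussianPDFReal (hσ _).le]
    exact log_prod fun j _ => (gaussianPDFReal_pos _ _ _ (variance_ne_zero j)).ne'
  have hasDerivAt_coord (j : ι) :
      HasDerivAt (fun t => Function.update x i t j) ((Pi.single i 1 : ι → ℝ) j) (x i) :=
    hasDerivAt_pi.1 (hasDerivAt_update x i (x i)) j
  have hasDerivAt_node (j : ι) :
      HasDerivAt (fun t => log (gaussianPDFReal (f j (Function.update x i t))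
          ((σ j).toNNReal ^ 2) (Function.update x i t j)))
        ((x j - f j x) / (σ j) ^ 2 * (f' j - (Pi.single i 1 : ι → ℝ) j)) (x i) := by
    simpa only [Function.update_eq_self, NNReal.coe_pow, coe_toNNReal _ (hσ j).le] using
      hasDerivAt_log_gaussianPDFReal (variance_ne_zero j) (hf j) (hasDerivAt_coord j)
  simp only [log_p_eq_sum]
  refine (HasDerivAt.fun_sum fun j _ => hasDerivAt_node j).congr_deriv ?_
  -- Only the coordinate `j = i` moves with `t`, which leaves the single term outside the sum.
  simp only [mul_sub, Finset.sum_sub_distrib, Pi.single_apply, mul_ite, mul_one, mul_zero,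
    Finset.sum_ite_eq', Finset.mem_univ, if_true]
  ring

/-- Score decomposition for a general node (equation (14)):
`∂_i log p (x) = -(x i - f i x)/(σ i)^2 + ∑ j ((x j - f j x)/(σ j)^2) ⬝ ∂_i f j (x)`. -/
theorem score_decomposition
    (d : ℕ) (σ : Fin d → ℝ) (hσ : ∀ j, 0 < σ j)
    (f : Fin d → (Fin d → ℝ) → ℝ) (hf : ∀ j, Differentiable ℝ (f j))
    (p : (Fin d → ℝ) → ℝ)
    (hp : ∀ x, p x = ∏ j, (σ j * Real.sqrt (2 * π))⁻¹ *
      Real.exp (-(x j - f j x) ^ 2 / (2 * (σ j) ^ 2))) :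
    ∀ (i : Fin d) (x : Fin d → ℝ),
      deriv (fun t => Real.log (p (Function.update x i t))) (x i)
        = -(x i - f i x) / (σ i) ^ 2
          + ∑ j, ((x j - f j x) / (σ j) ^ 2) *
              deriv (fun t => f j (Function.update x i t)) (x i) := fun i x =>
  (score_decomposition_general hσ hp fun j =>
    ((hf j _).comp (x i) (hasDerivAt_update x i (x i)).differentiableAt).hasDerivAt).deriv
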